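/- The spanning-subset expansion P solves the ordered contraction–deletion recurrence in its first edge: P(λ_1,…,λ_n) = α(λ_1) · P^c(λ_2 + ε A^{(0)}_{2,1} λ_1, …, λ_n + ε A^{(0)}_{n,1} λ_1) + β(λ_1) · P^d(λ_2 + ε′ A^{(0)}_{2,1} λ_1, …, λ_n + ε′ A^{(0)}_{n,1} λ_1), where P^c (respectively P^d) is the polynomial defined by exactly the same construction on the index set {2,…,n} (with its induced order), with the same ε, ε′, q, α, β, and with the data κ^c(B′) = κ(B′ ∪ {1}) and (A^c)_{B′}^{(m)} = A_{B′∪{1}}^{(m+1)} (respectively κ^d(B′) = κ(B′) and (A^d)_{B′}^{(m)} = A_{B′}^{(m+1)}) for B′ ⊆ {2,…,n}. -/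

import Mathlib

open Finset

/-- Product of adjacency factors along a path `ℓ → j₁ → ⋯ → jₚ → k`:
for each consecutive pair `(a, b)` in the list, a factor `A^{(a-1)}_{b,a}`. -/
def pathProd {R : Type*} [CommRing R] (A : ℕ → ℕ → ℕ → R) : List ℕ → R
  | [] => 1
  | [_] => 1
  | a :: b :: rest => A (a - 1) b a * pathProd A (b :: rest)

/-- The quantity `𝒜_{k,ℓ}(Q)` for a subset `Q = {j₁ < ⋯ < jₚ} ⊆ {ℓ+1,…,k−1}`. -/
def calA {R : Type*} [CommRing R] (ε : ℕ → R) (A : ℕ → ℕ → ℕ → R)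
    (k ℓ : ℕ) (Q : Finset ℕ) : R :=
  (ε ℓ * ∏ j ∈ Q, ε j) * pathProd A (ℓ :: ((Q.sort (· ≤ ·)) ++ [k]))

/-- The coefficients `C_{k,ℓ}`: `C_{k,k} = 1` and, for `k > ℓ`,
`C_{k,ℓ} = Σ_{Q ⊆ {ℓ+1,…,k−1}} 𝒜_{k,ℓ}(Q)`. -/
def Cgen {R : Type*} [CommRing R] (ε : ℕ → R) (A : ℕ → ℕ → ℕ → R) (k ℓ : ℕ) : R :=
  if k = ℓ then 1 else ∑ Q ∈ (Finset.Ioo ℓ k).powerset, calA ε A k ℓ Q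

/-- The modified weight `λ̂ₖ = Σ_{ℓ=1}^{k} C_{k,ℓ} λ_ℓ`. -/
def lamHat {R : Type*} [CommRing R] (ε : ℕ → R) (A : ℕ → ℕ → ℕ → R)
    (lam : ℕ → R) (k : ℕ) : R :=
  ∑ ℓ ∈ Finset.Icc 1 k, Cgen ε A k ℓ * lam ℓ

/-- The `B`-dependent ordering parameters: `ε^B_j = ε` if `j ∈ B` and `ε′` otherwise. -/
def epsB {R : Type*} [CommRing R] (ε ε' : R) (B : Finset ℕ) : ℕ → R :=
  fun j => if j ∈ B then ε else ε'

/-- The order-dependent generalized Tutte polynomial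
`P(λ₁,…,λₙ) = Σ_{B ⊆ {1,…,n}} q^{κ(B)} ∏_{j=1}^{n} γ^j_B(λ̂_{j;B}(λ₁,…,λ_j))`,
where `γ^j_B = α` if `j ∈ B` and `β` otherwise, and
`λ̂_{k;B} = Σ_{ℓ=1}^{k} C_{k,ℓ;B} λ_ℓ` is built from the parameters `ε^B` and the
adjacency data `A_B`. -/
def genP {R : Type*} [CommRing R] (ε ε' q : R) (α β : R → R) (n : ℕ)
    (κ : Finset ℕ → ℕ) (A : Finset ℕ → ℕ → ℕ → ℕ → R) (lam : ℕ → R) : R :=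
  ∑ B ∈ (Finset.Icc 1 n).powerset, q ^ κ B *
    ∏ j ∈ Finset.Icc 1 n,
      (if j ∈ B then α else β) (lamHat (epsB ε ε' B) (A B) lam j)

/-!
The modified weights solve the unit triangular system
`λ̂ₖ = λₖ + Σ_{1 ≤ ℓ < k} ε_ℓ A^{(ℓ-1)}_{k,ℓ} λ̂_ℓ`: group the paths of `𝒜_{k,ℓ}` by their last
intermediate vertex. Substituting its first solution `λ̂₁ = λ₁` into the other equations leaves a
system of the same form for `λ̂₂, …, λ̂ₙ`, with `λⱼ` replaced by `λⱼ + ε₁ A^{(0)}_{j,1} λ₁`. So each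
product `∏ⱼ γ^j_B(λ̂_{j;B})` is `γ^1_B(λ₁)` times a product of the same kind on `{2,…,n}`, and the
recurrence follows on splitting the sum over `B` according to whether `1 ∈ B`.
-/

theorem prod_Icc_add_one_right {M : Type*} [CommMonoid M] {m n : ℕ} (hmn : m ≤ n + 1)
    (f : ℕ → M) : ∏ j ∈ Icc m (n + 1), f j = f m * ∏ j ∈ Icc m n, f (j + 1) := by
  rw [← insert_Icc_add_one_left_eq_Icc hmn, prod_insert (by simp), ← image_add_right_Icc,
    prod_image (add_left_injective 1).injOn]

theorem sum_powerset_Icc_add_one_right {M : Type*} [AddCommMonoid M] {m n : ℕ}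
    (hmn : m ≤ n + 1) (f : Finset ℕ → M) :
    ∑ B ∈ (Icc m (n + 1)).powerset, f B
      = ∑ B ∈ (Icc m n).powerset, f (insert m (B.image (· + 1)))
        + ∑ B ∈ (Icc m n).powerset, f (B.image (· + 1)) := by
  have hinj : Function.Injective fun B : Finset ℕ => B.image (· + 1) :=
    image_injective (add_left_injective 1)
  rw [← insert_Icc_add_one_left_eq_Icc hmn, sum_powerset_insert (by simp),
    ← image_add_right_Icc, powerset_image, sum_image hinj.injOn, sum_image hinj.injOn, add_comm]

theorem sort_insert_of_forall_lt {α : Type*} [LinearOrder α] {s : Finset α} {a : α}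
    (h : ∀ b ∈ s, b < a) : (insert a s).sort (· ≤ ·) = s.sort (· ≤ ·) ++ [a] := by
  have hnodup : (s.sort (· ≤ ·) ++ [a]).Nodup := by
    simpa [List.nodup_append] using fun b hb => (h b hb).ne
  have hsorted : (s.sort (· ≤ ·) ++ [a]).Pairwise (· ≤ ·) := by
    simpa [List.pairwise_append] using fun b hb => (h b hb).le
  have hset : (s.sort (· ≤ ·) ++ [a]).toFinset = insert a s := by
    ext; simp
  rw [← hset, (List.toFinset_sort _ hnodup).2 hsorted]

/-- The adjacency data on the edges `{2, 3, …}`, relabelled to `{1, 2, …}` by `j + 1 ↦ j`. The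
stage `m` moves along with the edges because `A^{(m)}` is the adjacency once the first `m` edges
have been processed. -/
def tailAdj {R : Type*} (A : ℕ → ℕ → ℕ → R) : ℕ → ℕ → ℕ → R :=
  fun m k ℓ => A (m + 1) (k + 1) (ℓ + 1)

/-- The weights of the edges `{2, 3, …}`, relabelled to `{1, 2, …}`, after edge `1` has been
processed with ordering parameter `c`: the weight of each of them is increased by `c λ₁` times its
adjacency `a = A^{(0)}` to edge `1`. -/
def tailWeight {R : Type*} [CommRing R] (c : R) (a : ℕ → ℕ → R) (lam : ℕ → R) : ℕ → R :=
  fun j => lam (j + 1) + c * a (j + 1) 1 * lam 1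

/-- The product `∏ⱼ γ^j_B(λ̂_{j;B})` attached to a single edge set `B` in the expansion of `P`, for
adjacency data `A = A_B`. -/
def edgeSetProd {R : Type*} [CommRing R] (ε ε' : R) (α β : R → R) (n : ℕ)
    (A : ℕ → ℕ → ℕ → R) (lam : ℕ → R) (B : Finset ℕ) : R :=
  ∏ j ∈ Icc 1 n, (if j ∈ B then α else β) (lamHat (epsB ε ε' B) A lam j)

section ModifiedWeights

variable {R : Type*} [CommRing R] (e : ℕ → R) (A : ℕ → ℕ → ℕ → R)

theorem pathProd_append_pair (l : List ℕ) (m k : ℕ) :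
    pathProd A (l ++ [m, k]) = pathProd A (l ++ [m]) * A (m - 1) k m := by
  induction l with
  | nil => simp [pathProd]
  | cons a l ih =>
    cases l with
    | nil => simp [pathProd]
    | cons b l =>
      simp only [List.cons_append, pathProd] at ih ⊢
      rw [ih, mul_assoc]

theorem calA_empty (k ℓ : ℕ) : calA e A k ℓ ∅ = e ℓ * A (ℓ - 1) k ℓ := by
  simp [calA, pathProd]

theorem calA_insert_of_forall_lt {k ℓ m : ℕ} {Q : Finset ℕ} (hQ : ∀ j ∈ Q, j < m) :
    calA e A k ℓ (insert m Q) = e m * A (m - 1) k m * calA e A m ℓ Q := by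
  have hm : m ∉ Q := fun h => (hQ m h).false
  have hpath : pathProd A (ℓ :: ((insert m Q).sort (· ≤ ·) ++ [k]))
      = pathProd A (ℓ :: (Q.sort (· ≤ ·) ++ [m])) * A (m - 1) k m := by
    simpa [sort_insert_of_forall_lt hQ] using
      pathProd_append_pair A (ℓ :: Q.sort (· ≤ ·)) m k
  rw [calA, calA, hpath, prod_insert hm]
  ring

theorem Cgen_self (k : ℕ) : Cgen e A k k = 1 := if_pos rfl

theorem Cgen_of_lt {k ℓ : ℕ} (h : ℓ < k) :
    Cgen e A k ℓ = ∑ Q ∈ (Ioo ℓ k).powerset, calA e A k ℓ Q := if_neg h.ne'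

theorem sum_powerset_Ioo_calA (k : ℕ) {ℓ a : ℕ} (h : ℓ < a) :
    ∑ Q ∈ (Ioo ℓ a).powerset, calA e A k ℓ Q
      = ∑ m ∈ Ico ℓ a, e m * A (m - 1) k m * Cgen e A m ℓ := by
  induction a, h using Nat.le_induction with
  | base =>
    have hIoo : Ioo ℓ (ℓ + 1) = ∅ := by ext; simp
    simp [hIoo, calA_empty, Cgen_self]
  | succ a h ih =>
    have hIoo : Ioo ℓ (a + 1) = insert a (Ioo ℓ a) := by
      ext; simp only [mem_Ioo, mem_insert]; omega
    have hmax : ∑ Q ∈ (Ioo ℓ a).powerset, calA e A k ℓ (insert a Q)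
        = e a * A (a - 1) k a * Cgen e A a ℓ := by
      rw [Cgen_of_lt e A h, mul_sum]
      exact sum_congr rfl fun Q hQ => calA_insert_of_forall_lt e A fun j hj =>
        (mem_Ioo.1 (mem_powerset.1 hQ hj)).2
    rw [hIoo, sum_powerset_insert (by simp), ih, hmax, sum_Ico_succ_top (Nat.le_of_succ_le h)]

theorem Cgen_eq_sum_Ico {k ℓ : ℕ} (h : ℓ < k) :
    Cgen e A k ℓ = ∑ m ∈ Ico ℓ k, e m * A (m - 1) k m * Cgen e A m ℓ := by
  rw [Cgen_of_lt e A h, sum_powerset_Ioo_calA e A k h]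

theorem lamHat_eq_add_sum (lam : ℕ → R) {k : ℕ} (hk : 1 ≤ k) :
    lamHat e A lam k
      = lam k + ∑ m ∈ Ico 1 k, e m * A (m - 1) k m * lamHat e A lam m := by
  have hbelow : ∑ ℓ ∈ Ico 1 k, Cgen e A k ℓ * lam ℓ
      = ∑ m ∈ Ico 1 k, e m * A (m - 1) k m * lamHat e A lam m := calc
    _ = ∑ ℓ ∈ Ico 1 k, ∑ m ∈ Ico ℓ k, e m * A (m - 1) k m * (Cgen e A m ℓ * lam ℓ) := by
      refine sum_congr rfl fun ℓ hℓ => ?_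
      rw [Cgen_eq_sum_Ico e A (mem_Ico.1 hℓ).2, sum_mul]
      simp only [mul_assoc]
    _ = ∑ m ∈ Ico 1 k, ∑ ℓ ∈ Icc 1 m, e m * A (m - 1) k m * (Cgen e A m ℓ * lam ℓ) :=
      sum_Ico_Ico_comm 1 k _
    _ = _ := by simp only [lamHat, mul_sum]
  rw [lamHat, ← Ico_add_one_right_eq_Icc, sum_Ico_succ_top hk, hbelow, Cgen_self, one_mul, add_comm]

theorem lamHat_one (lam : ℕ → R) : lamHat e A lam 1 = lam 1 := by
  simp [lamHat_eq_add_sum e A lam le_rfl]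

theorem lamHat_add_one {e' : ℕ → R} (he : ∀ j, 1 ≤ j → e (j + 1) = e' j) (lam : ℕ → R)
    {k : ℕ} (hk : 1 ≤ k) :
    lamHat e A lam (k + 1) = lamHat e' (tailAdj A) (tailWeight (e 1) (A 0) lam) k := by
  induction k using Nat.strong_induction_on with
  | _ k ih =>
    have htail : ∑ m ∈ Ico (1 + 1) (k + 1), e m * A (m - 1) (k + 1) m * lamHat e A lam m
        = ∑ m ∈ Ico 1 k, e' m * tailAdj A (m - 1) k m
            * lamHat e' (tailAdj A) (tailWeight (e 1) (A 0) lam) m := by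
      rw [← sum_Ico_add']
      refine sum_congr rfl fun m hm => ?_
      obtain ⟨h1m, hmk⟩ := mem_Ico.1 hm
      rw [ih m hmk h1m, he m h1m, tailAdj, Nat.sub_add_cancel h1m, Nat.add_sub_cancel]
    rw [lamHat_eq_add_sum e A lam (Nat.le_add_left 1 k), lamHat_eq_add_sum e' _ _ hk,
      sum_eq_sum_Ico_succ_bot (Nat.lt_add_of_pos_left hk), htail, lamHat_one, tailWeight,
      Nat.sub_self, add_assoc]

end ModifiedWeights

section EdgeSets

variable {R : Type*} [CommRing R] (ε ε' : R) (α β : R → R) (n : ℕ)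

theorem edgeSetProd_add_one (A : ℕ → ℕ → ℕ → R) (lam : ℕ → R) {S B : Finset ℕ}
    (hSB : ∀ j, 1 ≤ j → (j + 1 ∈ S ↔ j ∈ B)) :
    edgeSetProd ε ε' α β (n + 1) A lam S
      = (if 1 ∈ S then α else β) (lam 1) *
          edgeSetProd ε ε' α β n (tailAdj A) (tailWeight (epsB ε ε' S 1) (A 0) lam) B := by
  have he (j : ℕ) (hj : 1 ≤ j) : epsB ε ε' S (j + 1) = epsB ε ε' B j := by
    simp only [epsB, hSB j hj]
  rw [edgeSetProd, prod_Icc_add_one_right (Nat.le_add_left 1 n), lamHat_one, edgeSetProd]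
  congr 1
  refine prod_congr rfl fun j hj => ?_
  have h1j : 1 ≤ j := (mem_Icc.1 hj).1
  rw [lamHat_add_one _ _ he lam h1j]
  simp only [hSB j h1j]

theorem edgeSetProd_insert_one (A : ℕ → ℕ → ℕ → R) (lam : ℕ → R) (B : Finset ℕ) :
    edgeSetProd ε ε' α β (n + 1) A lam (insert 1 (B.image (· + 1)))
      = α (lam 1) * edgeSetProd ε ε' α β n (tailAdj A) (tailWeight ε (A 0) lam) B := by
  rw [edgeSetProd_add_one (B := B) _ _ _ _ _ _ _ fun j hj => by simp [Nat.ne_zero_of_lt hj]]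
  simp [epsB]

theorem edgeSetProd_image_add_one (A : ℕ → ℕ → ℕ → R) (lam : ℕ → R) {B : Finset ℕ}
    (hB : 0 ∉ B) :
    edgeSetProd ε ε' α β (n + 1) A lam (B.image (· + 1))
      = β (lam 1) * edgeSetProd ε ε' α β n (tailAdj A) (tailWeight ε' (A 0) lam) B := by
  rw [edgeSetProd_add_one (B := B) _ _ _ _ _ _ _ fun j _ => by simp]
  simp [epsB, hB]

theorem genP_eq_sum_edgeSetProd (q : R) (κ : Finset ℕ → ℕ) (A : Finset ℕ → ℕ → ℕ → ℕ → R)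
    (lam : ℕ → R) :
    genP ε ε' q α β n κ A lam
      = ∑ B ∈ (Icc 1 n).powerset, q ^ κ B * edgeSetProd ε ε' α β n (A B) lam B := rfl

theorem genP_first_edge_recurrence_general (q : R) (κ : Finset ℕ → ℕ)
    (A : Finset ℕ → ℕ → ℕ → ℕ → R) (hA : ∀ B, A B 0 = A ∅ 0) (lam : ℕ → R) :
    genP ε ε' q α β (n + 1) κ A lam
      = α (lam 1) *
          genP ε ε' q α β n (fun B => κ (insert 1 (B.image (· + 1))))
            (fun B => tailAdj (A (insert 1 (B.image (· + 1))))) (tailWeight ε (A ∅ 0) lam)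
        + β (lam 1) *
          genP ε ε' q α β n (fun B => κ (B.image (· + 1)))
            (fun B => tailAdj (A (B.image (· + 1)))) (tailWeight ε' (A ∅ 0) lam) := by
  rw [genP_eq_sum_edgeSetProd, genP_eq_sum_edgeSetProd, genP_eq_sum_edgeSetProd, mul_sum, mul_sum,
    sum_powerset_Icc_add_one_right (Nat.le_add_left 1 n)]
  congr 1 <;> refine sum_congr rfl fun B hB => ?_
  · rw [edgeSetProd_insert_one, hA, mul_left_comm]
  · have h0 : 0 ∉ B := fun h => by simpa using mem_powerset.1 hB h
    rw [edgeSetProd_image_add_one _ _ _ _ _ _ _ h0, hA, mul_left_comm]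

end EdgeSets

/-- The spanning-subset expansion `P` solves the ordered
contraction–deletion recurrence in its first edge:
`P(λ₁,…,λₙ) = α(λ₁) · Pᶜ(λ₂ + ε A^{(0)}_{2,1} λ₁, …, λₙ + ε A^{(0)}_{n,1} λ₁)
            + β(λ₁) · Pᵈ(λ₂ + ε′ A^{(0)}_{2,1} λ₁, …, λₙ + ε′ A^{(0)}_{n,1} λ₁)`,
where `Pᶜ` (resp. `Pᵈ`) is the polynomial given by the same construction on the index set
`{2,…,n}` with its induced order — here relabelled to `{1,…,n−1}` via the order isomorphism
`j ↦ j+1` — with the same `ε, ε′, q, α, β`, and data `κᶜ(B′) = κ(B′ ∪ {1})`,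
`(Aᶜ)_{B′}^{(m)} = A_{B′∪{1}}^{(m+1)}` (resp. `κᵈ(B′) = κ(B′)`,
`(Aᵈ)_{B′}^{(m)} = A_{B′}^{(m+1)}`). The hypothesis `hA` states that `A_B^{(m)}` depends
only on `B ∩ {1,…,m}`; in particular `A^{(0)} = A_∅^{(0)}` is independent of `B`. -/
theorem genP_first_edge_recurrence {R : Type*} [CommRing R]
    (ε ε' q : R) (α β : R → R) (n : ℕ) (hn : 1 ≤ n)
    (κ : Finset ℕ → ℕ) (A : Finset ℕ → ℕ → ℕ → ℕ → R)
    (hA : ∀ (B B' : Finset ℕ) (m : ℕ),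
      B ∩ Finset.Icc 1 m = B' ∩ Finset.Icc 1 m → A B m = A B' m)
    (lam : ℕ → R) :
    genP ε ε' q α β n κ A lam
      = α (lam 1) *
          genP ε ε' q α β (n - 1)
            (fun B' => κ (insert 1 (B'.image (· + 1))))
            (fun B' m k ℓ => A (insert 1 (B'.image (· + 1))) (m + 1) (k + 1) (ℓ + 1))
            (fun j => lam (j + 1) + ε * A ∅ 0 (j + 1) 1 * lam 1)
        + β (lam 1) *
            genP ε ε' q α β (n - 1)
              (fun B' => κ (B'.image (· + 1)))
              (fun B' m k ℓ => A (B'.image (· + 1)) (m + 1) (k + 1) (ℓ + 1))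
              (fun j => lam (j + 1) + ε' * A ∅ 0 (j + 1) 1 * lam 1) := by
  obtain ⟨n, rfl⟩ := Nat.exists_eq_add_of_le' hn
  exact genP_first_edge_recurrence_general ε ε' α β n q κ A (fun B => hA B ∅ 0 (by simp)) lam
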